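/- Assume 𝒱 ≠ {0}. Let V* ∈ ℝ^{n×d} be a matrix whose columns form a basis of 𝒱*, let (M̂,N̂) ∈ ℱ(𝒱), and let B̂_N be the (unique) matrix satisfying B N̂ = V* B̂_N. Then: (a) for any (M,N) ∈ ℱ(𝒱) there exists a matrix K̂ such that (A+BM)|_{V*} = (A+BM̂)|_{V*} + B̂_N K̂; and (b) for any matrix K̂ of compatible dimensions there exists a matrix M such that (M,N̂) ∈ ℱ(𝒱) and (A+BM)|_{V*} = (A+BM̂)|_{V*} + B̂_N K̂. -/

import Mathlib

/-!
Two friends `M`, `Mh` differ on `V` by inputs that lie in `ker D` and are mapped into `V` by `B`;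
hence the columns of `B (M - Mh) Vst` lie in `B (ker D) ⊓ V = range (B Nh)`, so that
`B (M - Mh) Vst = B Nh K = Vst BN K` for some `K` (`exists_eq_mul_of_range_le`), and `Vst` can be
cancelled because it has a left inverse `L` (`exists_left_inverse_of_ker_eq_bot`).
Conversely, given `K`, the feedback `Mh + Nh K L` is again a friend: the correction `Nh K L` takes
values in `range Nh ≤ ker D`, and `B` sends it into `range (B Nh) ≤ V`.
-/

open Matrix

noncomputable section

/-- The linear map between Euclidean spaces induced by a real matrix. -/
def matL {ι κ : Type*} [Fintype ι] [Fintype κ] [DecidableEq κ]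
    (A : Matrix ι κ ℝ) : EuclideanSpace ℝ κ →ₗ[ℝ] EuclideanSpace ℝ ι :=
  Matrix.toEuclideanLin A

variable {ι κ ρ σ : Type*} [Fintype ι] [DecidableEq ι] [Fintype κ] [DecidableEq κ]
  [Fintype ρ] [DecidableEq ρ] [Fintype σ] [DecidableEq σ]

/-- State trajectory of `x_{k+1} = A x_k + B a_k` from initial state `x0`
and input sequence `a`. -/
def stateTraj (A : Matrix ι ι ℝ) (B : Matrix ι κ ℝ)
    (x0 : EuclideanSpace ℝ ι) (a : ℕ → EuclideanSpace ℝ κ) :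
    ℕ → EuclideanSpace ℝ ι
  | 0 => x0
  | k + 1 => matL A (stateTraj A B x0 a k) + matL B (a k)

/-- Output trajectory `y_k = C x_k + D a_k` of the system. -/
def outTraj (A : Matrix ι ι ℝ) (B : Matrix ι κ ℝ)
    (C : Matrix ρ ι ℝ) (D : Matrix ρ κ ℝ)
    (x0 : EuclideanSpace ℝ ι) (a : ℕ → EuclideanSpace ℝ κ) (k : ℕ) :
    EuclideanSpace ℝ ρ :=
  matL C (stateTraj A B x0 a k) + matL D (a k)

/-- `W` is an output-nulling subspace for the system `(A,B,C,D)`. -/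
def IsOutputNulling (A : Matrix ι ι ℝ) (B : Matrix ι κ ℝ)
    (C : Matrix ρ ι ℝ) (D : Matrix ρ κ ℝ)
    (W : Submodule ℝ (EuclideanSpace ℝ ι)) : Prop :=
  ∃ M : Matrix κ ι ℝ,
    (∀ v ∈ W, matL (A + B * M) v ∈ W) ∧ (∀ v ∈ W, matL (C + D * M) v = 0)

/-- `V` is the maximal output-nulling subspace for the system `(A,B,C,D)`. -/
def IsMaxOutputNulling (A : Matrix ι ι ℝ) (B : Matrix ι κ ℝ)
    (C : Matrix ρ ι ℝ) (D : Matrix ρ κ ℝ)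
    (V : Submodule ℝ (EuclideanSpace ℝ ι)) : Prop :=
  IsOutputNulling A B C D V ∧
    ∀ W : Submodule ℝ (EuclideanSpace ℝ ι), IsOutputNulling A B C D W → W ≤ V

/-- `(M, N)` is a friend of the (maximal output-nulling) subspace `V`. -/
def IsFriend (A : Matrix ι ι ℝ) (B : Matrix ι κ ℝ)
    (C : Matrix ρ ι ℝ) (D : Matrix ρ κ ℝ)
    (V : Submodule ℝ (EuclideanSpace ℝ ι))
    (M : Matrix κ ι ℝ) (N : Matrix κ σ ℝ) : Prop :=
  (∀ v ∈ V, matL (A + B * M) v ∈ V) ∧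
  (∀ v ∈ V, matL (C + D * M) v = 0) ∧
  (LinearMap.range (matL N) ≤ LinearMap.ker (matL D)) ∧
  (LinearMap.range (matL (B * N)) =
    (LinearMap.ker (matL D)).map (matL B) ⊓ V)

/-- The controllable subspace of the pair `(A, B)`. -/
def ctrlSubspace {n m : ℕ}
    (A : Matrix (Fin n) (Fin n) ℝ) (B : Matrix (Fin n) (Fin m) ℝ) :
    Submodule ℝ (EuclideanSpace ℝ (Fin n)) :=
  ⨆ j : Fin n, LinearMap.range (matL (A ^ (j : ℕ) * B))

lemma matL_mul_apply (X : Matrix ι κ ℝ) (Y : Matrix κ ρ ℝ) (v : EuclideanSpace ℝ ρ) :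
    matL (X * Y) v = matL X (matL Y v) := by
  simp [matL, Matrix.toLpLin_apply]

lemma matL_add_apply (X Y : Matrix ι κ ℝ) (v : EuclideanSpace ℝ κ) :
    matL (X + Y) v = matL X v + matL Y v := by
  simp [matL]

lemma matL_sub_apply (X Y : Matrix ι κ ℝ) (v : EuclideanSpace ℝ κ) :
    matL (X - Y) v = matL X v - matL Y v := by
  simp [matL]

lemma matL_surj (f : EuclideanSpace ℝ κ →ₗ[ℝ] EuclideanSpace ℝ ι) :
    ∃ X : Matrix ι κ ℝ, matL X = f :=
  (Matrix.toEuclideanLin (𝕜 := ℝ)).surjective f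

lemma matL_ext {X Y : Matrix ι κ ℝ} (h : ∀ v, matL X v = matL Y v) : X = Y :=
  (Matrix.toEuclideanLin (𝕜 := ℝ)).injective (LinearMap.ext h)

/-- A matrix whose column space is contained in that of `Y` is a right multiple of `Y`. -/
lemma exists_eq_mul_of_range_le (X : Matrix ι κ ℝ) (Y : Matrix ι ρ ℝ)
    (h : ∀ v, matL X v ∈ LinearMap.range (matL Y)) : ∃ K : Matrix ρ κ ℝ, X = Y * K := by
  obtain ⟨g, hg⟩ := Module.projective_lifting_property (matL Y).rangeRestrict
    ((matL X).codRestrict _ h) (matL Y).surjective_rangeRestrict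
  obtain ⟨K, rfl⟩ := matL_surj g
  refine ⟨K, matL_ext fun v => ?_⟩
  rw [matL_mul_apply]
  exact (congrArg Subtype.val (LinearMap.congr_fun hg v)).symm

lemma exists_left_inverse_of_ker_eq_bot (X : Matrix ι κ ℝ) (h : LinearMap.ker (matL X) = ⊥) :
    ∃ L : Matrix κ ι ℝ, L * X = 1 := by
  obtain ⟨g, hg⟩ := (matL X).exists_leftInverse_of_injective h
  obtain ⟨L, rfl⟩ := matL_surj g
  refine ⟨L, matL_ext fun v => ?_⟩
  rw [matL_mul_apply]
  refine (LinearMap.congr_fun hg v).trans ?_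
  simp [matL]

/-- Lemma 3 of the paper: parameterization of the restricted closed-loop
matrices `(A+BM)|_{V*}` over all friends `(M,N)` of `𝒱`. -/
theorem restricted_matrix_parameterization {n m p d s : ℕ}
    (A : Matrix (Fin n) (Fin n) ℝ) (B : Matrix (Fin n) (Fin m) ℝ)
    (C : Matrix (Fin p) (Fin n) ℝ) (D : Matrix (Fin p) (Fin m) ℝ)
    (V : Submodule ℝ (EuclideanSpace ℝ (Fin n)))
    (hV : IsMaxOutputNulling A B C D V) (hVne : V ≠ ⊥)
    (Vst : Matrix (Fin n) (Fin d) ℝ)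
    (hVstSpan : LinearMap.range (matL Vst) = V ⊓ ctrlSubspace A B)
    (hVstInj : LinearMap.ker (matL Vst) = ⊥)
    (Mh : Matrix (Fin m) (Fin n) ℝ) (Nh : Matrix (Fin m) (Fin s) ℝ)
    (hMNh : IsFriend A B C D V Mh Nh)
    (BN : Matrix (Fin d) (Fin s) ℝ) (hBN : B * Nh = Vst * BN)
    (Φh : Matrix (Fin d) (Fin d) ℝ) (hΦh : (A + B * Mh) * Vst = Vst * Φh) :
    (∀ (s' : ℕ) (M : Matrix (Fin m) (Fin n) ℝ) (N : Matrix (Fin m) (Fin s') ℝ),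
      IsFriend A B C D V M N →
      ∀ Φ : Matrix (Fin d) (Fin d) ℝ, (A + B * M) * Vst = Vst * Φ →
        ∃ K : Matrix (Fin s) (Fin d) ℝ, Φ = Φh + BN * K) ∧
    (∀ K : Matrix (Fin s) (Fin d) ℝ,
      ∃ M : Matrix (Fin m) (Fin n) ℝ, IsFriend A B C D V M Nh ∧
        (A + B * M) * Vst = Vst * (Φh + BN * K)) := by
  obtain ⟨L, hL⟩ := exists_left_inverse_of_ker_eq_bot Vst hVstInj
  obtain ⟨hinv, hnull, hker, hrange⟩ := hMNh
  have hVmem : ∀ v, matL Vst v ∈ V := fun v =>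
    (hVstSpan.le (LinearMap.mem_range_self (matL Vst) v)).1
  constructor
  · rintro s' M N ⟨hinv', hnull', -, -⟩ Φ hΦ
    obtain ⟨K, hK⟩ := exists_eq_mul_of_range_le (B * ((M - Mh) * Vst)) (B * Nh) (by
      intro v
      rw [hrange]
      refine ⟨⟨matL ((M - Mh) * Vst) v, ?_, (matL_mul_apply _ _ _).symm⟩, ?_⟩
      · have h1 := hnull' _ (hVmem v)
        have h2 := hnull _ (hVmem v)
        have h3 : D * ((M - Mh) * Vst) = (C + D * M) * Vst - (C + D * Mh) * Vst := by
          simp only [Matrix.mul_add, Matrix.add_mul, Matrix.mul_sub, Matrix.sub_mul, Matrix.mul_assoc]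
          abel
        change matL D _ = 0
        rw [← matL_mul_apply, h3, matL_sub_apply, matL_mul_apply, matL_mul_apply, h1, h2, sub_zero]
      · have h3 : B * ((M - Mh) * Vst) = (A + B * M) * Vst - (A + B * Mh) * Vst := by
          simp only [Matrix.mul_add, Matrix.add_mul, Matrix.mul_sub, Matrix.sub_mul, Matrix.mul_assoc]
          abel
        change matL _ _ ∈ V
        rw [h3, matL_sub_apply, matL_mul_apply, matL_mul_apply]
        exact V.sub_mem (hinv' _ (hVmem v)) (hinv _ (hVmem v)))
    refine ⟨K, ?_⟩
    have h : Vst * Φ = Vst * (Φh + BN * K) := by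
      rw [Matrix.mul_add, ← Matrix.mul_assoc, ← hBN, ← hK, ← hΦ, ← hΦh]
      simp only [Matrix.mul_add, Matrix.add_mul, Matrix.mul_sub, Matrix.sub_mul, Matrix.mul_assoc]
      abel
    simpa [← Matrix.mul_assoc, hL] using congrArg (L * ·) h
  · intro K
    have hcorr : ∀ v, matL (Nh * (K * L)) v ∈ LinearMap.range (matL Nh) := fun v =>
      ⟨matL (K * L) v, (matL_mul_apply _ _ _).symm⟩
    refine ⟨Mh + Nh * (K * L), ⟨fun v hv => ?_, fun v hv => ?_, hker, hrange⟩, ?_⟩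
    · rw [Matrix.mul_add, ← add_assoc, matL_add_apply, ← Matrix.mul_assoc, matL_mul_apply (B * Nh)]
      exact V.add_mem (hinv v hv) (hrange.le (LinearMap.mem_range_self _ _)).2
    · have h0 : matL D (matL (Nh * (K * L)) v) = 0 := hker (hcorr v)
      rw [Matrix.mul_add, ← add_assoc, matL_add_apply, hnull v hv, matL_mul_apply, h0, add_zero]
    · rw [Matrix.mul_add, ← add_assoc, Matrix.add_mul, hΦh, Matrix.mul_add, ← Matrix.mul_assoc Vst,
        ← hBN]
      simp only [Matrix.mul_assoc, hL, Matrix.mul_one]
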